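/- Fix ε > 0 and δ ∈ (0,1). Suppose there exists an optimal occupancy d*_0 (the occupancy of an unregularized optimal policy π*_0) satisfying d*_0(s,a)/d^D(s,a) ≤ B_{w,0} for all (s,a); let B_{f,0} bound |f| on [0,B_{w,0}]. Suppose assumptions (A1)–(A6) hold for α = α_ε := ε/(2B_{f,0}). Then there is a universal constant C1 > 0 such that if n ≥ C1·(ε·B_{f,α_ε} + 2·B_{w,α_ε}·B_{e,α_ε}·B_{f,0})²/(ε⁶·M_f²·(1−γ)⁴)·log(4|V||W|/δ) and n0 ≥ C1·(2·B_{v,α_ε}·B_{f,0})²/(ε⁶·M_f²·(1−γ)²)·log(4|V|/δ), then the output π̂ of PRO-RL with input α = α_ε satisfies J(π*_0) − J(π̂) ≤ ε with probability at least 1−δ. -/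

import Mathlib

open MeasureTheory
open scoped BigOperators ENNReal

namespace ProRL

/-- The discrete measure on a type induced by a real-valued weight function. -/
noncomputable def discMeasure {X : Type*} [MeasurableSpace X] (p : X → ℝ) : Measure X :=
  Measure.sum fun x => ENNReal.ofReal (p x) • Measure.dirac x

variable {S A : Type*} [Fintype S] [Fintype A]

/-- The `t`-step state-action distribution of policy `π` started from `μ0`. -/
noncomputable def saDist (P : S → A → S → ℝ) (μ0 : S → ℝ) (π : S → A → ℝ) :
    ℕ → S → A → ℝ
  | 0 => fun s a => μ0 s * π s a
  | t + 1 => fun s a =>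
      (∑ s' : S, ∑ a' : A, saDist P μ0 π t s' a' * P s' a' s) * π s a

/-- The discounted state-action occupancy `d^π(s,a)`. -/
noncomputable def occ (P : S → A → S → ℝ) (μ0 : S → ℝ) (γ : ℝ) (π : S → A → ℝ)
    (s : S) (a : A) : ℝ :=
  (1 - γ) * ∑' t : ℕ, γ ^ t * saDist P μ0 π t s a

/-- The (normalized) expected discounted return `J(π) = E_{d^π}[r]`. -/
noncomputable def Jret (P : S → A → S → ℝ) (r : S → A → ℝ) (μ0 : S → ℝ) (γ : ℝ)
    (π : S → A → ℝ) : ℝ :=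
  ∑ s : S, ∑ a : A, occ P μ0 γ π s a * r s a

/-- `π` is a (stationary, stochastic) policy. -/
def IsPolicy (π : S → A → ℝ) : Prop :=
  (∀ s a, 0 ≤ π s a) ∧ ∀ s, ∑ a : A, π s a = 1

/-- The Bellman residual `e_v(s,a) = r(s,a) + γ ∑_{s'} P(s'|s,a) v(s') − v(s)`. -/
noncomputable def eV (P : S → A → S → ℝ) (r : S → A → ℝ) (γ : ℝ) (v : S → ℝ)
    (s : S) (a : A) : ℝ :=
  r s a + γ * ∑ s' : S, P s a s' * v s' - v s

/-- The population Lagrangian `L_α(v,w)`. -/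
noncomputable def Lag (P : S → A → S → ℝ) (r : S → A → ℝ) (μ0 : S → ℝ) (γ : ℝ)
    (dD : S → A → ℝ) (f : ℝ → ℝ) (α : ℝ) (v : S → ℝ) (w : S → A → ℝ) : ℝ :=
  (1 - γ) * ∑ s : S, μ0 s * v s
    - α * ∑ s : S, ∑ a : A, dD s a * f (w s a)
    + ∑ s : S, ∑ a : A, dD s a * (w s a * eV P r γ v s a)

/-- The empirical Lagrangian `L̂_α(v,w)` built from the transition dataset `D`
(`D i = ((sᵢ,aᵢ), s'ᵢ)`, with `rᵢ = r sᵢ aᵢ`) and initial-state dataset `D0`. -/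
noncomputable def empLag (r : S → A → ℝ) (γ : ℝ) (f : ℝ → ℝ) (α : ℝ) {n n0 : ℕ}
    (D : Fin n → (S × A) × S) (D0 : Fin n0 → S) (v : S → ℝ) (w : S → A → ℝ) : ℝ :=
  (1 - γ) * ((n0 : ℝ)⁻¹ * ∑ j : Fin n0, v (D0 j))
    - α * ((n : ℝ)⁻¹ * ∑ i : Fin n, f (w (D i).1.1 (D i).1.2))
    + (n : ℝ)⁻¹ * ∑ i : Fin n,
        w (D i).1.1 (D i).1.2 *
          (r (D i).1.1 (D i).1.2 + γ * v (D i).2 - v (D i).1.1)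

/-- Per-state normalization of a state-action weight into a policy
(uniform where the state marginal is not positive). -/
noncomputable def normPolicy (d : S → A → ℝ) (s : S) (a : A) : ℝ :=
  if 0 < ∑ a' : A, d s a' then d s a / ∑ a' : A, d s a'
  else (Fintype.card A : ℝ)⁻¹

/-- Policy extraction from a density ratio `w` and a behavior policy `piD`
(uniform where the normalizer vanishes). -/
noncomputable def extractPolicy (piD w : S → A → ℝ) (s : S) (a : A) : ℝ :=
  if 0 < ∑ a' : A, w s a' * piD s a' then
    w s a * piD s a / ∑ a' : A, w s a' * piD s a'
  else (Fintype.card A : ℝ)⁻¹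

/-- Behavior policy `π_D(a|s)` obtained from the data distribution `d^D`. -/
noncomputable def behPolicy (dD : S → A → ℝ) : S → A → ℝ := normPolicy dD

/-- The state-action measure `d(s,a) = w(s,a)·d^D(s,a)`. -/
noncomputable def dstar (dD w : S → A → ℝ) : S → A → ℝ := fun s a => w s a * dD s a

/-- The weighted `L²(d^D)` norm of a state-action function. -/
noncomputable def l2nrm (dD g : S → A → ℝ) : ℝ :=
  Real.sqrt (∑ s : S, ∑ a : A, dD s a * g s a ^ 2)

/-- `‖π(·|s) − π'(·|s)‖₁`. -/
noncomputable def l1Pol (π π' : S → A → ℝ) (s : S) : ℝ := ∑ a : A, |π s a - π' s a|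

/-- `E_{s ∼ d}[‖π(·|s) − π'(·|s)‖₁]` where `d` is a state-action distribution. -/
noncomputable def expL1 (d π π' : S → A → ℝ) : ℝ :=
  ∑ s : S, (∑ a : A, d s a) * l1Pol π π' s

/-- The statistical error term `ε_stat`. -/
noncomputable def epsStat (γ α Bv Bf Bw Be δ : ℝ) (nV nW n n0 : ℕ) : ℝ :=
  (1 - γ) * Bv * Real.sqrt (2 * Real.log (4 * (nV : ℝ) / δ) / (n0 : ℝ))
    + (α * Bf + Bw * Be) *
        Real.sqrt (2 * Real.log (4 * ((nV : ℝ) * (nW : ℝ)) / δ) / (n : ℝ))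

/-- The Bellman flow equations for a state-action measure `d`. -/
def BellmanFlow (P : S → A → S → ℝ) (μ0 : S → ℝ) (γ : ℝ) (d : S → A → ℝ) : Prop :=
  ∀ s : S, ∑ a : A, d s a
    = (1 - γ) * μ0 s + γ * ∑ s' : S, ∑ a' : A, P s' a' s * d s' a'

/-- `(v,w)` is a saddle point of `max_{w ≥ 0} min_v L_α(v,w)`. -/
def IsSaddle (P : S → A → S → ℝ) (r : S → A → ℝ) (μ0 : S → ℝ) (γ : ℝ)
    (dD : S → A → ℝ) (f : ℝ → ℝ) (α : ℝ) (v : S → ℝ) (w : S → A → ℝ) : Prop :=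
  (∀ s a, 0 ≤ w s a) ∧
  (∀ v' : S → ℝ, Lag P r μ0 γ dD f α v w ≤ Lag P r μ0 γ dD f α v' w) ∧
  (∀ w' : S → A → ℝ, (∀ s a, 0 ≤ w' s a) →
    Lag P r μ0 γ dD f α v w' ≤ Lag P r μ0 γ dD f α v w)

/-- `(v,w)` is a saddle point of `max_{0 ≤ w ≤ Bw} min_v L_α(v,w)` (constrained LP). -/
def IsSaddleB (P : S → A → S → ℝ) (r : S → A → ℝ) (μ0 : S → ℝ) (γ : ℝ)
    (dD : S → A → ℝ) (f : ℝ → ℝ) (α Bw : ℝ) (v : S → ℝ) (w : S → A → ℝ) : Prop :=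
  (∀ s a, 0 ≤ w s a ∧ w s a ≤ Bw) ∧
  (∀ v' : S → ℝ, Lag P r μ0 γ dD f α v w ≤ Lag P r μ0 γ dD f α v' w) ∧
  (∀ w' : S → A → ℝ, (∀ s a, 0 ≤ w' s a ∧ w' s a ≤ Bw) →
    Lag P r μ0 γ dD f α v w' ≤ Lag P r μ0 γ dD f α v w)

/-- `(vhat, what)` is an exact max-min point of the empirical Lagrangian over `V × W`:
`vhat ∈ argmin_{v ∈ V} L̂(v, what)` and `what ∈ argmax_{w ∈ W} min_{v ∈ V} L̂(v, w)`. -/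
def IsProRLOutput (r : S → A → ℝ) (γ : ℝ) (f : ℝ → ℝ) (α : ℝ)
    (V : Finset (S → ℝ)) (W : Finset (S → A → ℝ)) {n n0 : ℕ}
    (D : Fin n → (S × A) × S) (D0 : Fin n0 → S)
    (vhat : S → ℝ) (what : S → A → ℝ) : Prop :=
  vhat ∈ V ∧ what ∈ W ∧
  (∀ v ∈ V, empLag r γ f α D D0 vhat what ≤ empLag r γ f α D D0 v what) ∧
  ∀ w ∈ W, ∀ vw ∈ V,
    (∀ v ∈ V, empLag r γ f α D D0 vw w ≤ empLag r γ f α D D0 v w) →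
      empLag r γ f α D D0 vw w ≤ empLag r γ f α D D0 vhat what

/-- Weight of a transition tuple `((s,a),s')` under `(s,a) ∼ d^D`, `s' ∼ P(·|s,a)`. -/
noncomputable def tupleWeight (P : S → A → S → ℝ) (dD : S → A → ℝ)
    (x : (S × A) × S) : ℝ :=
  dD x.1.1 x.1.2 * P x.1.1 x.1.2 x.2

/-- The joint law of the transition dataset `D` (i.i.d. from `d^D ⊗ P`) and the
initial-state dataset `D0` (i.i.d. from `μ0`). -/
noncomputable def dataMeasure [MeasurableSpace S] [MeasurableSpace A]
    (P : S → A → S → ℝ) (dD : S → A → ℝ) (μ0 : S → ℝ) (n n0 : ℕ) :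
    Measure ((Fin n → (S × A) × S) × (Fin n0 → S)) :=
  (Measure.pi fun _ : Fin n => discMeasure (tupleWeight P dD)).prod
    (Measure.pi fun _ : Fin n0 => discMeasure μ0)

/-- The joint law of datasets `D1`, `D2` (both i.i.d. from `d^D ⊗ P`) and `D0`
(i.i.d. from `μ0`), used by PRO-RL-BC. -/
noncomputable def dataMeasure3 [MeasurableSpace S] [MeasurableSpace A]
    (P : S → A → S → ℝ) (dD : S → A → ℝ) (μ0 : S → ℝ) (n1 n2 n0 : ℕ) :
    Measure ((Fin n1 → (S × A) × S) × (Fin n2 → (S × A) × S) × (Fin n0 → S)) :=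
  (Measure.pi fun _ : Fin n1 => discMeasure (tupleWeight P dD)).prod
    ((Measure.pi fun _ : Fin n2 => discMeasure (tupleWeight P dD)).prod
      (Measure.pi fun _ : Fin n0 => discMeasure μ0))

/-- `v` is the optimal value function: it satisfies the Bellman optimality equation. -/
def IsOptValue [Nonempty A] (P : S → A → S → ℝ) (r : S → A → ℝ) (γ : ℝ)
    (v : S → ℝ) : Prop :=
  ∀ s : S, v s = Finset.univ.sup' Finset.univ_nonempty
    (fun a : A => r s a + γ * ∑ s' : S, P s a s' * v s')

/-- Basic assumptions on the MDP, the regularizer-free data, and the data distribution. -/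
structure MDPAssumptions (P : S → A → S → ℝ) (r : S → A → ℝ) (μ0 : S → ℝ) (γ : ℝ)
    (dD : S → A → ℝ) : Prop where
  P_nonneg : ∀ s a s', 0 ≤ P s a s'
  P_sum : ∀ s a, ∑ s' : S, P s a s' = 1
  r_nonneg : ∀ s a, 0 ≤ r s a
  r_le_one : ∀ s a, r s a ≤ 1
  γ_nonneg : 0 ≤ γ
  γ_lt_one : γ < 1
  μ0_pos : ∀ s, 0 < μ0 s
  μ0_sum : ∑ s : S, μ0 s = 1
  dD_nonneg : ∀ s a, 0 ≤ dD s a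
  dD_sum : ∑ s : S, ∑ a : A, dD s a = 1

/-- Regularity of the regularizer `f`: continuously differentiable with derivative `f'`,
`M_f`-strongly convex, and with `|f'| ≤ Bf'`, `|f| ≤ Bf` on `[0, Bw]`. -/
structure RegAssumptions (f f' : ℝ → ℝ) (Mf Bw Bf' Bf : ℝ) : Prop where
  deriv : ∀ x, HasDerivAt f (f' x) x
  strong : StrongConvexOn Set.univ Mf f
  Mf_pos : 0 < Mf
  f'_bdd : ∀ x, 0 ≤ x → x ≤ Bw → |f' x| ≤ Bf'
  f_bdd : ∀ x, 0 ≤ x → x ≤ Bw → |f x| ≤ Bf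

/-- `w` is an optimal density ratio of the unregularized LP (the set `W*₀`). -/
def OptRatio (P : S → A → S → ℝ) (r : S → A → ℝ) (μ0 : S → ℝ) (γ : ℝ)
    (dD : S → A → ℝ) (w : S → A → ℝ) : Prop :=
  (∀ s a, 0 ≤ w s a) ∧ BellmanFlow P μ0 γ (dstar dD w) ∧
  ∀ w' : S → A → ℝ, (∀ s a, 0 ≤ w' s a) → BellmanFlow P μ0 γ (dstar dD w') →
    ∑ s : S, ∑ a : A, dstar dD w' s a * r s a
      ≤ ∑ s : S, ∑ a : A, dstar dD w s a * r s a

/-! ### Concentration of empirical means -/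

section Concentration

variable {X : Type*} [Fintype X] [MeasurableSpace X]

lemma isProbabilityMeasure_discMeasure {p : X → ℝ} (hp : ∀ x, 0 ≤ p x) (hp1 : ∑ x, p x = 1) :
    IsProbabilityMeasure (discMeasure p) := by
  constructor
  rw [discMeasure, Measure.sum_fintype]
  simp only [Measure.coe_finsetSum, Finset.sum_apply, Measure.smul_apply, measure_univ,
    smul_eq_mul, mul_one]
  rw [← ENNReal.ofReal_sum_of_nonneg fun x _ => hp x, hp1, ENNReal.ofReal_one]

variable [MeasurableSingletonClass X]

lemma integral_discMeasure {p : X → ℝ} (hp : ∀ x, 0 ≤ p x) (g : X → ℝ) :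
    ∫ x, g x ∂(discMeasure p) = ∑ x, p x * g x := by
  rw [discMeasure, Measure.sum_fintype, integral_finsetSum_measure]
  · refine Finset.sum_congr rfl fun x _ => ?_
    rw [integral_smul_measure, integral_dirac, ENNReal.toReal_ofReal (hp x), smul_eq_mul]
  · intro x _
    exact (integrable_dirac (by simp)).smul_measure ENNReal.ofReal_ne_top

/-- One-sided Hoeffding inequality for the empirical mean of a bounded function. -/
lemma measureReal_empMean_sub_ge_le {p : X → ℝ} (hp : ∀ x, 0 ≤ p x) (hp1 : ∑ x, p x = 1)
    {g : X → ℝ} {B : ℝ} (hB : 0 < B) (hg : ∀ x, |g x| ≤ B) {n : ℕ} (hn : 0 < n)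
    {t : ℝ} (ht : 0 ≤ t) :
    (Measure.pi fun _ : Fin n => discMeasure p).real
        {x | t ≤ (n : ℝ)⁻¹ * ∑ i, g (x i) - ∑ y, p y * g y}
      ≤ Real.exp (-(n * t ^ 2 / (2 * B ^ 2))) := by
  have := isProbabilityMeasure_discMeasure hp hp1
  set μ := Measure.pi fun _ : Fin n => discMeasure p
  set m := ∑ y, p y * g y with hm
  have hgm : Measurable g := measurable_of_finite g
  have hnR : (0 : ℝ) < n := by exact_mod_cast hn
  have hind : ProbabilityTheory.iIndepFun (fun (i : Fin n) (x : Fin n → X) => g (x i) - m) μ :=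
    ProbabilityTheory.iIndepFun_pi (X := fun _ : Fin n => fun y => g y - m)
      fun _ => (hgm.sub_const m).aemeasurable
  have hmean : ∀ i : Fin n, ∫ x, g (x i) ∂μ = m := by
    intro i
    have h := (measurePreserving_eval (fun _ : Fin n => discMeasure p) i)
    have h2 := integral_map (μ := μ) (φ := Function.eval i) (f := g)
      h.measurable.aemeasurable hgm.aestronglyMeasurable
    rw [h.map_eq, integral_discMeasure hp] at h2
    exact h2.symm
  have hsub : ∀ i ∈ (Finset.univ : Finset (Fin n)), ProbabilityTheory.HasSubgaussianMGF
      (fun x : Fin n → X => g (x i) - m) ((‖B - -B‖₊ / 2) ^ 2) μ := by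
    intro i _
    have h := ProbabilityTheory.hasSubgaussianMGF_of_mem_Icc (μ := μ)
      (X := fun x : Fin n → X => g (x i)) (a := -B) (b := B)
      (hgm.comp (measurable_pi_apply i)).aemeasurable
      (ae_of_all _ fun x => abs_le.mp (hg (x i)))
    rwa [hmean i] at h
  have h := ProbabilityTheory.HasSubgaussianMGF.measure_sum_ge_le_of_iIndepFun hind hsub
    (ε := n * t) (by positivity)
  have hset : {x : Fin n → X | t ≤ (n : ℝ)⁻¹ * ∑ i, g (x i) - m}
      = {x | n * t ≤ ∑ i, (g (x i) - m)} := by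
    ext x
    simp only [Set.mem_ofPred_eq, Finset.sum_sub_distrib, Finset.sum_const, Finset.card_univ,
      Fintype.card_fin, nsmul_eq_mul]
    rw [← mul_le_mul_iff_right₀ hnR, mul_sub, mul_inv_cancel_left₀ hnR.ne']
  rw [hset]
  refine h.trans_eq ?_
  have hc : ((‖B - -B‖₊ / 2 : NNReal) : ℝ) = B := by
    rw [NNReal.coe_div, coe_nnnorm, Real.norm_eq_abs, abs_of_pos (by linarith)]
    norm_num
  congr 1
  rw [Finset.sum_const, Finset.card_univ, Fintype.card_fin, nsmul_eq_mul, NNReal.coe_mul,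
    NNReal.coe_pow, hc, NNReal.coe_natCast]
  field_simp

/-- Two-sided Hoeffding inequality for the empirical mean of a bounded function. -/
lemma measure_empMean_abs_sub_ge_le {p : X → ℝ} (hp : ∀ x, 0 ≤ p x) (hp1 : ∑ x, p x = 1)
    {g : X → ℝ} {B : ℝ} (hB : 0 < B) (hg : ∀ x, |g x| ≤ B) {n : ℕ} (hn : 0 < n)
    {t : ℝ} (ht : 0 ≤ t) :
    (Measure.pi fun _ : Fin n => discMeasure p)
        {x | t ≤ |(n : ℝ)⁻¹ * ∑ i, g (x i) - ∑ y, p y * g y|}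
      ≤ ENNReal.ofReal (2 * Real.exp (-(n * t ^ 2 / (2 * B ^ 2)))) := by
  have := isProbabilityMeasure_discMeasure hp hp1
  have h1 := measureReal_empMean_sub_ge_le hp hp1 hB hg hn ht
  have h2 := measureReal_empMean_sub_ge_le hp hp1 (g := fun x => -g x) hB
    (fun x => by simpa using hg x) hn ht
  rw [← ofReal_measureReal]
  apply ENNReal.ofReal_le_ofReal
  rw [two_mul]
  refine (measureReal_mono ?_).trans ((measureReal_union_le _ _).trans (add_le_add h1 h2))
  intro x hx
  simp only [Set.mem_ofPred_eq, Set.mem_union, mul_neg, Finset.sum_neg_distrib] at hx ⊢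
  rcases le_abs.mp hx with h | h
  · exact Or.inl h
  · right; linarith

end Concentration

/-! ### Occupancies -/

section Occupancy

variable {P : S → A → S → ℝ} {r : S → A → ℝ} {μ0 : S → ℝ} {γ : ℝ} {dD : S → A → ℝ}
  {π : S → A → ℝ}

lemma saDist_nonneg (h : MDPAssumptions P r μ0 γ dD) (hπ : IsPolicy π) (t : ℕ) (s : S) (a : A) :
    0 ≤ saDist P μ0 π t s a := by
  induction t generalizing s a with
  | zero => exact mul_nonneg (h.μ0_pos s).le (hπ.1 s a)
  | succ t ih =>
    exact mul_nonneg (Finset.sum_nonneg fun s' _ => Finset.sum_nonneg fun a' _ =>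
      mul_nonneg (ih s' a') (h.P_nonneg s' a' s)) (hπ.1 s a)

lemma saDist_sum (h : MDPAssumptions P r μ0 γ dD) (hπ : IsPolicy π) (t : ℕ) :
    ∑ s, ∑ a, saDist P μ0 π t s a = 1 := by
  induction t with
  | zero => simp [saDist, ← Finset.mul_sum, hπ.2, h.μ0_sum]
  | succ t ih =>
    simp only [saDist, ← Finset.mul_sum, hπ.2, mul_one]
    rw [Finset.sum_comm]
    simp_rw [Finset.sum_comm (s := (Finset.univ : Finset S)) (t := (Finset.univ : Finset A)),
      ← Finset.mul_sum, h.P_sum, mul_one]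
    rw [Finset.sum_comm, ih]

lemma saDist_le_one (h : MDPAssumptions P r μ0 γ dD) (hπ : IsPolicy π) (t : ℕ) (s : S) (a : A) :
    saDist P μ0 π t s a ≤ 1 := by
  rw [← saDist_sum h hπ t]
  exact (Finset.single_le_sum (fun a _ => saDist_nonneg h hπ t s a) (Finset.mem_univ a)).trans
    (Finset.single_le_sum (f := fun s => ∑ a, saDist P μ0 π t s a)
      (fun s _ => Finset.sum_nonneg fun a _ => saDist_nonneg h hπ t s a) (Finset.mem_univ s))

lemma saDist_eq_marginal_mul (hπ : IsPolicy π) (t : ℕ) (s : S) (a : A) :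
    saDist P μ0 π t s a = (∑ a', saDist P μ0 π t s a') * π s a := by
  cases t <;> simp only [saDist, ← Finset.mul_sum, hπ.2, mul_one]

lemma hasSum_occ (h : MDPAssumptions P r μ0 γ dD) (hπ : IsPolicy π) (s : S) (a : A) :
    HasSum (fun t => (1 - γ) * (γ ^ t * saDist P μ0 π t s a)) (occ P μ0 γ π s a) := by
  refine HasSum.mul_left _ (Summable.hasSum ?_)
  refine Summable.of_nonneg_of_le
    (fun t => mul_nonneg (pow_nonneg h.γ_nonneg t) (saDist_nonneg h hπ t s a))
    (fun t => mul_le_of_le_one_right (pow_nonneg h.γ_nonneg t) (saDist_le_one h hπ t s a))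
    (summable_geometric_of_lt_one h.γ_nonneg h.γ_lt_one)

lemma occ_nonneg (h : MDPAssumptions P r μ0 γ dD) (hπ : IsPolicy π) (s : S) (a : A) :
    0 ≤ occ P μ0 γ π s a :=
  (hasSum_occ h hπ s a).nonneg fun t => mul_nonneg (sub_nonneg.mpr h.γ_lt_one.le)
    (mul_nonneg (pow_nonneg h.γ_nonneg t) (saDist_nonneg h hπ t s a))

lemma occ_eq_marginal_mul (h : MDPAssumptions P r μ0 γ dD) (hπ : IsPolicy π) (s : S) (a : A) :
    occ P μ0 γ π s a = (∑ a', occ P μ0 γ π s a') * π s a := by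
  refine (hasSum_occ h hπ s a).unique ?_
  have e : (fun t => (1 - γ) * (γ ^ t * saDist P μ0 π t s a))
      = fun t => (∑ a', (1 - γ) * (γ ^ t * saDist P μ0 π t s a')) * π s a := by
    funext t
    rw [saDist_eq_marginal_mul hπ]
    simp only [← Finset.mul_sum]
    ring
  rw [e]
  exact (hasSum_sum fun a' (_ : a' ∈ Finset.univ) => hasSum_occ h hπ s a').mul_right (π s a)

lemma bellmanFlow_occ (h : MDPAssumptions P r μ0 γ dD) (hπ : IsPolicy π) :
    BellmanFlow P μ0 γ (occ P μ0 γ π) := by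
  intro s
  refine (hasSum_sum fun a' (_ : a' ∈ Finset.univ) => hasSum_occ h hπ s a').unique ?_
  rw [add_comm, ← hasSum_nat_add_iff' 1]
  have key := ((hasSum_sum fun s' (_ : s' ∈ Finset.univ) => hasSum_sum
    fun a' (_ : a' ∈ Finset.univ) => (hasSum_occ h hπ s' a').mul_left (P s' a' s))).mul_left γ
  have e : (fun t => ∑ a, (1 - γ) * (γ ^ (t + 1) * saDist P μ0 π (t + 1) s a))
      = fun t => γ * ∑ s', ∑ a', P s' a' s * ((1 - γ) * (γ ^ t * saDist P μ0 π t s' a')) := by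
    funext t
    simp only [saDist, ← Finset.mul_sum, hπ.2, mul_one]
    simp only [Finset.mul_sum]
    refine Finset.sum_congr rfl fun s' _ => Finset.sum_congr rfl fun a' _ => ?_
    ring
  have e0 : ∑ t ∈ Finset.range 1, ∑ a, (1 - γ) * (γ ^ t * saDist P μ0 π t s a)
      = (1 - γ) * μ0 s := by
    simp [saDist, ← Finset.mul_sum, hπ.2]
  rw [e, e0, add_sub_cancel_right]
  exact key

/-- Two measures satisfying the Bellman flow are close if one is nearly consistent with the
policy underlying the other. -/
lemma sum_abs_sub_le_of_bellmanFlow (h : MDPAssumptions P r μ0 γ dD) (hπ : IsPolicy π)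
    {d d' : S → A → ℝ} (hd : BellmanFlow P μ0 γ d) (hd' : BellmanFlow P μ0 γ d')
    (hd'π : ∀ s a, d' s a = (∑ a', d' s a') * π s a) :
    (1 - γ) * ∑ s, ∑ a, |d s a - d' s a|
      ≤ ∑ s, ∑ a, |d s a - (∑ a', d s a') * π s a| := by
  have hmarg : ∑ s, |∑ a, d s a - ∑ a, d' s a| ≤ γ * ∑ s, ∑ a, |d s a - d' s a| := by
    calc ∑ s, |∑ a, d s a - ∑ a, d' s a|
        ≤ ∑ s, γ * ∑ s', ∑ a', P s' a' s * |d s' a' - d' s' a'| := by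
          refine Finset.sum_le_sum fun s _ => ?_
          have e : ∑ a, d s a - ∑ a, d' s a
              = γ * ∑ s', ∑ a', P s' a' s * (d s' a' - d' s' a') := by
            rw [hd s, hd' s]
            simp only [mul_sub, Finset.sum_sub_distrib]
            ring
          rw [e, abs_mul, abs_of_nonneg h.γ_nonneg]
          refine mul_le_mul_of_nonneg_left ?_ h.γ_nonneg
          refine (Finset.abs_sum_le_sum_abs _ _).trans (Finset.sum_le_sum fun s' _ => ?_)
          refine (Finset.abs_sum_le_sum_abs _ _).trans (Finset.sum_le_sum fun a' _ => ?_)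
          rw [abs_mul, abs_of_nonneg (h.P_nonneg s' a' s)]
      _ = γ * ∑ s, ∑ a, |d s a - d' s a| := by
          rw [← Finset.mul_sum, Finset.sum_comm]
          simp_rw [Finset.sum_comm (s := (Finset.univ : Finset S))
            (t := (Finset.univ : Finset A)), ← Finset.sum_mul, h.P_sum, one_mul]
  have htri : ∑ s, ∑ a, |d s a - d' s a|
      ≤ ∑ s, ∑ a, |d s a - (∑ a', d s a') * π s a| + ∑ s, |∑ a, d s a - ∑ a, d' s a| := by
    rw [← Finset.sum_add_distrib]
    refine Finset.sum_le_sum fun s _ => ?_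
    calc ∑ a, |d s a - d' s a|
        ≤ ∑ a, (|d s a - (∑ a', d s a') * π s a|
            + |∑ a, d s a - ∑ a, d' s a| * π s a) := by
          refine Finset.sum_le_sum fun a _ => ?_
          conv_lhs => rw [hd'π s a]
          rw [← abs_of_nonneg (hπ.1 s a), ← abs_mul, abs_of_nonneg (hπ.1 s a)]
          refine le_trans (le_of_eq ?_) (abs_add_le _ _)
          congr 1
          ring
      _ = _ := by rw [Finset.sum_add_distrib, ← Finset.mul_sum, hπ.2, mul_one]
  linarith

lemma sum_mul_sub_Jret_le (h : MDPAssumptions P r μ0 γ dD) (hπ : IsPolicy π)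
    {d : S → A → ℝ} (hd : BellmanFlow P μ0 γ d) :
    (1 - γ) * (∑ s, ∑ a, d s a * r s a - Jret P r μ0 γ π)
      ≤ ∑ s, ∑ a, |d s a - (∑ a', d s a') * π s a| := by
  refine le_trans ?_ (sum_abs_sub_le_of_bellmanFlow h hπ hd (bellmanFlow_occ h hπ)
    (occ_eq_marginal_mul h hπ))
  refine mul_le_mul_of_nonneg_left ?_ (sub_nonneg.mpr h.γ_lt_one.le)
  rw [Jret, ← Finset.sum_sub_distrib]
  refine Finset.sum_le_sum fun s _ => ?_
  rw [← Finset.sum_sub_distrib]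
  refine Finset.sum_le_sum fun a _ => ?_
  rw [← sub_mul]
  exact (mul_le_mul_of_nonneg_right (le_abs_self _) (h.r_nonneg s a)).trans
    (mul_le_of_le_one_right (abs_nonneg _) (h.r_le_one s a))

end Occupancy

/-! ### Policy extraction -/

section Extraction

variable {S A : Type*} [Fintype A] {dD w : S → A → ℝ}

lemma isPolicy_extractPolicy [Nonempty A] {piD : S → A → ℝ} (hpiD : ∀ s a, 0 ≤ piD s a)
    (hw : ∀ s a, 0 ≤ w s a) : IsPolicy (extractPolicy piD w) := by
  constructor
  · intro s a
    unfold extractPolicy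
    split_ifs with hpos
    · exact div_nonneg (mul_nonneg (hw s a) (hpiD s a)) hpos.le
    · positivity
  · intro s
    unfold extractPolicy
    split_ifs with hpos
    · rw [← Finset.sum_div, div_self hpos.ne']
    · simp

lemma behPolicy_nonneg (hdD : ∀ s a, 0 ≤ dD s a) (s : S) (a : A) : 0 ≤ behPolicy dD s a := by
  unfold behPolicy normPolicy
  split_ifs with hpos
  · exact div_nonneg (hdD s a) hpos.le
  · positivity

lemma dstar_eq_marginal_mul_extractPolicy (hdD : ∀ s a, 0 ≤ dD s a) (hw : ∀ s a, 0 ≤ w s a)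
    (s : S) (a : A) :
    dstar dD w s a = (∑ a', dstar dD w s a') * extractPolicy (behPolicy dD) w s a := by
  have hnn : ∀ a, 0 ≤ dstar dD w s a := fun a => mul_nonneg (hw s a) (hdD s a)
  rcases (Finset.sum_nonneg fun a (_ : a ∈ Finset.univ) => hnn a).eq_or_lt with h0 | hpos
  · rw [← h0, zero_mul]
    exact (Finset.sum_eq_zero_iff_of_nonneg fun a _ => hnn a).mp h0.symm a (Finset.mem_univ a)
  · have hD : 0 < ∑ a', dD s a' := by
      refine (Finset.sum_nonneg fun a _ => hdD s a).lt_of_ne fun h0 => hpos.ne' ?_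
      refine Finset.sum_eq_zero fun a ha => ?_
      rw [dstar, (Finset.sum_eq_zero_iff_of_nonneg fun a _ => hdD s a).mp h0.symm a ha, mul_zero]
    have hden : ∑ a', w s a' * behPolicy dD s a'
        = (∑ a', dstar dD w s a') / ∑ a', dD s a' := by
      simp only [behPolicy, normPolicy, if_pos hD, dstar, Finset.sum_div, mul_div_assoc]
    rw [extractPolicy, hden, if_pos (div_pos hpos hD)]
    simp only [behPolicy, normPolicy, if_pos hD]
    rw [show w s a * (dD s a / ∑ a', dD s a') = dstar dD w s a / ∑ a', dD s a' from
      (mul_div_assoc _ _ _).symm]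
    field_simp

/-- The consistency error of `d` with a policy is controlled by the distance of `d` to any
measure that factors through that policy. -/
lemma sum_abs_sub_marginal_mul_le [Fintype S] {π d d' : S → A → ℝ} (hπ : IsPolicy π)
    (hd' : ∀ s a, d' s a = (∑ a', d' s a') * π s a) :
    ∑ s, ∑ a, |d s a - (∑ a', d s a') * π s a| ≤ 2 * ∑ s, ∑ a, |d s a - d' s a| := by
  rw [Finset.mul_sum]
  refine Finset.sum_le_sum fun s _ => ?_
  have hm : |∑ a, d s a - ∑ a, d' s a| ≤ ∑ a, |d s a - d' s a| := by
    rw [← Finset.sum_sub_distrib]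
    exact Finset.abs_sum_le_sum_abs _ _
  calc ∑ a, |d s a - (∑ a', d s a') * π s a|
      ≤ ∑ a, (|d s a - d' s a| + |∑ a, d s a - ∑ a, d' s a| * π s a) := by
        refine Finset.sum_le_sum fun a _ => ?_
        rw [← abs_of_nonneg (hπ.1 s a), ← abs_mul, abs_of_nonneg (hπ.1 s a)]
        refine le_trans (le_of_eq ?_) (abs_sub _ _)
        congr 1
        conv_rhs => rw [hd' s a]
        ring
    _ = ∑ a, |d s a - d' s a| + |∑ a, d s a - ∑ a, d' s a| := by
        rw [Finset.sum_add_distrib, ← Finset.mul_sum, hπ.2, mul_one]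
    _ ≤ 2 * ∑ a, |d s a - d' s a| := by linarith

end Extraction

/-! ### The Lagrangian and its saddle points -/

section Saddle

variable {P : S → A → S → ℝ} {r : S → A → ℝ} {μ0 : S → ℝ} {γ : ℝ} {dD : S → A → ℝ}
  {f : ℝ → ℝ} {α : ℝ} {v : S → ℝ} {w : S → A → ℝ}

lemma Lag_eq_sum_flow_residual (v : S → ℝ) (w : S → A → ℝ) :
    Lag P r μ0 γ dD f α v w
      = ∑ s, ∑ a, dstar dD w s a * r s a - α * ∑ s, ∑ a, dD s a * f (w s a)
        + ∑ s, v s * ((1 - γ) * μ0 s + γ * ∑ s', ∑ a', P s' a' s * dstar dD w s' a'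
            - ∑ a, dstar dD w s a) := by
  have h1 : ∑ s, v s * ((1 - γ) * μ0 s) = (1 - γ) * ∑ s, μ0 s * v s := by
    rw [Finset.mul_sum]
    exact Finset.sum_congr rfl fun s _ => by ring
  have h2 : ∑ s, v s * (γ * ∑ s', ∑ a', P s' a' s * dstar dD w s' a')
      = ∑ s, ∑ a, dstar dD w s a * (γ * ∑ s', P s a s' * v s') := by
    simp only [Finset.mul_sum]
    rw [Finset.sum_comm]
    refine Finset.sum_congr rfl fun s _ => ?_
    rw [Finset.sum_comm]
    exact Finset.sum_congr rfl fun a _ => Finset.sum_congr rfl fun s' _ => by ring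
  have h3 : ∑ s, v s * ∑ a, dstar dD w s a = ∑ s, ∑ a, dstar dD w s a * v s := by
    simp only [Finset.mul_sum, mul_comm]
  have h4 : ∑ s, ∑ a, dD s a * (w s a * eV P r γ v s a)
      = ∑ s, ∑ a, dstar dD w s a * r s a
        + ∑ s, ∑ a, dstar dD w s a * (γ * ∑ s', P s a s' * v s')
        - ∑ s, ∑ a, dstar dD w s a * v s := by
    simp only [← Finset.sum_add_distrib, ← Finset.sum_sub_distrib]
    refine Finset.sum_congr rfl fun s _ => Finset.sum_congr rfl fun a _ => ?_
    simp only [dstar, eV]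
    ring
  simp only [mul_sub, mul_add, Finset.sum_add_distrib, Finset.sum_sub_distrib] at *
  rw [Lag]
  linarith

lemma Lag_eq_of_bellmanFlow (hw : BellmanFlow P μ0 γ (dstar dD w)) (v : S → ℝ) :
    Lag P r μ0 γ dD f α v w
      = ∑ s, ∑ a, dstar dD w s a * r s a - α * ∑ s, ∑ a, dD s a * f (w s a) := by
  rw [Lag_eq_sum_flow_residual, add_eq_left]
  exact Finset.sum_eq_zero fun s _ => by rw [hw s, sub_self, mul_zero]

lemma IsSaddle.bellmanFlow (h : IsSaddle P r μ0 γ dD f α v w) :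
    BellmanFlow P μ0 γ (dstar dD w) := by
  set c : S → ℝ := fun s => (1 - γ) * μ0 s + γ * ∑ s', ∑ a', P s' a' s * dstar dD w s' a'
    - ∑ a, dstar dD w s a with hc
  have hmin := h.2.1 fun s => v s - c s
  rw [Lag_eq_sum_flow_residual, Lag_eq_sum_flow_residual] at hmin
  change _ + ∑ s, v s * c s ≤ _ + ∑ s, (v s - c s) * c s at hmin
  simp only [sub_mul, Finset.sum_sub_distrib] at hmin
  have h0 : ∑ s, c s * c s = 0 :=
    le_antisymm (by linarith) (Finset.sum_nonneg fun s _ => mul_self_nonneg _)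
  intro s
  have := (Finset.sum_eq_zero_iff_of_nonneg fun s _ => mul_self_nonneg (c s)).mp h0 s
    (Finset.mem_univ s)
  have hcs : c s = 0 := mul_self_eq_zero.mp this
  rw [hc] at hcs
  linarith

/-- The regularized solution is nearly optimal for the unregularized problem. -/
lemma IsSaddle.Jret_sub_le (hM : MDPAssumptions P r μ0 γ dD)
    (h : IsSaddle P r μ0 γ dD f α v w) (hα : 0 ≤ α) (hf : ∀ x, 0 ≤ f x)
    {π0 : S → A → ℝ} (hπ0 : IsPolicy π0) {Bw Bf : ℝ}
    (hcov : ∀ s a, occ P μ0 γ π0 s a ≤ Bw * dD s a)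
    (hBf : ∀ x, 0 ≤ x → x ≤ Bw → |f x| ≤ Bf) :
    Jret P r μ0 γ π0 - ∑ s, ∑ a, dstar dD w s a * r s a ≤ α * Bf := by
  set w0 : S → A → ℝ := fun s a => occ P μ0 γ π0 s a / dD s a with hw0
  have hw0nn : ∀ s a, 0 ≤ w0 s a := fun s a =>
    div_nonneg (occ_nonneg hM hπ0 s a) (hM.dD_nonneg s a)
  have hd0 : dstar dD w0 = occ P μ0 γ π0 := by
    funext s a
    rcases eq_or_ne (dD s a) 0 with h0 | h0
    · have := hcov s a
      rw [h0, mul_zero] at this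
      rw [dstar, h0, mul_zero]
      exact le_antisymm (occ_nonneg hM hπ0 s a) this
    · exact div_mul_cancel₀ _ h0
  have hflow0 : BellmanFlow P μ0 γ (dstar dD w0) := hd0 ▸ bellmanFlow_occ hM hπ0
  have hmax := h.2.2 w0 hw0nn
  rw [Lag_eq_of_bellmanFlow hflow0, Lag_eq_of_bellmanFlow h.bellmanFlow, hd0] at hmax
  have hpos : 0 ≤ α * ∑ s, ∑ a, dD s a * f (w s a) :=
    mul_nonneg hα (Finset.sum_nonneg fun s _ => Finset.sum_nonneg fun a _ =>
      mul_nonneg (hM.dD_nonneg s a) (hf _))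
  have hle : ∑ s, ∑ a, dD s a * f (w0 s a) ≤ Bf := by
    calc ∑ s, ∑ a, dD s a * f (w0 s a) ≤ ∑ s, ∑ a, dD s a * Bf := by
          refine Finset.sum_le_sum fun s _ => Finset.sum_le_sum fun a _ => ?_
          rcases (hM.dD_nonneg s a).eq_or_lt with h0 | h0
          · simp [← h0]
          · refine mul_le_mul_of_nonneg_left ((le_abs_self _).trans ?_) h0.le
            exact hBf _ (hw0nn s a) ((div_le_iff₀ h0).mpr (hcov s a))
      _ = Bf := by simp only [← Finset.sum_mul, hM.dD_sum, one_mul]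
  have := mul_le_mul_of_nonneg_left hle hα
  rw [Jret]
  linarith

/-- Strong convexity of the regularizer turns suboptimality into an `L²` distance. -/
lemma IsSaddle.sq_dist_le (hdD : ∀ s a, 0 ≤ dD s a)
    (h : IsSaddle P r μ0 γ dD f α v w) (hα : 0 ≤ α) {Mf : ℝ}
    (hf : StrongConvexOn Set.univ Mf f) {w' : S → A → ℝ} (hw' : ∀ s a, 0 ≤ w' s a) :
    α * Mf / 4 * ∑ s, ∑ a, dD s a * (w s a - w' s a) ^ 2
      ≤ Lag P r μ0 γ dD f α v w - Lag P r μ0 γ dD f α v w' := by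
  set wm : S → A → ℝ := fun s a => (1 / 2) * w s a + (1 / 2) * w' s a with hwm
  have hmax := h.2.2 wm fun s a => by
    have := h.1 s a
    have := hw' s a
    simp only [hwm]
    positivity
  have hconv : ∀ x y : ℝ, f ((1 / 2) * x + (1 / 2) * y)
      ≤ (1 / 2) * f x + (1 / 2) * f y - Mf / 8 * (x - y) ^ 2 := by
    intro x y
    have := hf.2 (Set.mem_univ x) (Set.mem_univ y) (by norm_num : (0 : ℝ) ≤ 1 / 2)
      (by norm_num : (0 : ℝ) ≤ 1 / 2) (by norm_num)
    simp only [smul_eq_mul, Real.norm_eq_abs, sq_abs] at this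
    linarith
  have hreg : ∑ s, ∑ a, dD s a * f (wm s a)
      ≤ (1 / 2) * ∑ s, ∑ a, dD s a * f (w s a) + (1 / 2) * ∑ s, ∑ a, dD s a * f (w' s a)
        - Mf / 8 * ∑ s, ∑ a, dD s a * (w s a - w' s a) ^ 2 := by
    simp only [Finset.mul_sum, ← Finset.sum_add_distrib, ← Finset.sum_sub_distrib]
    refine Finset.sum_le_sum fun s _ => Finset.sum_le_sum fun a _ => ?_
    have := mul_le_mul_of_nonneg_left (hconv (w s a) (w' s a)) (hdD s a)
    simp only [hwm]
    linarith
  have hlin : ∑ s, ∑ a, dD s a * (wm s a * eV P r γ v s a)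
      = (1 / 2) * ∑ s, ∑ a, dD s a * (w s a * eV P r γ v s a)
        + (1 / 2) * ∑ s, ∑ a, dD s a * (w' s a * eV P r γ v s a) := by
    simp only [Finset.mul_sum, ← Finset.sum_add_distrib]
    refine Finset.sum_congr rfl fun s _ => Finset.sum_congr rfl fun a _ => ?_
    simp only [hwm]
    ring
  have hreg' := mul_le_mul_of_nonneg_left hreg hα
  unfold Lag at *
  rw [hlin] at hmax
  linarith

lemma sum_abs_dstar_sub_sq_le (hdD : ∀ s a, 0 ≤ dD s a) (hdD1 : ∑ s, ∑ a, dD s a = 1)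
    (w w' : S → A → ℝ) :
    (∑ s, ∑ a, |dstar dD w s a - dstar dD w' s a|) ^ 2
      ≤ ∑ s, ∑ a, dD s a * (w s a - w' s a) ^ 2 := by
  have e : ∀ s a, |dstar dD w s a - dstar dD w' s a| = dD s a * |w s a - w' s a| := by
    intro s a
    rw [dstar, dstar, ← sub_mul, abs_mul, abs_of_nonneg (hdD s a), mul_comm]
  simp only [e]
  rw [← Fintype.sum_prod_type', ← Fintype.sum_prod_type']
  rw [← Fintype.sum_prod_type'] at hdD1
  rw [← one_mul (∑ x : S × A, dD x.1 x.2 * (w x.1 x.2 - w' x.1 x.2) ^ 2), ← hdD1]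
  refine Finset.sum_sq_le_sum_mul_sum_of_sq_le_mul _ (fun x _ => hdD x.1 x.2)
    (fun x _ => mul_nonneg (hdD x.1 x.2) (sq_nonneg _)) fun x _ => le_of_eq ?_
  rw [mul_pow, sq_abs]
  ring

/-- The extracted policy is near-optimal whenever its weight nearly maximizes the Lagrangian. -/
lemma IsSaddle.sum_sub_Jret_extractPolicy_le [Nonempty A] (hM : MDPAssumptions P r μ0 γ dD)
    (h : IsSaddle P r μ0 γ dD f α v w) (hα : 0 < α) {Mf : ℝ} (hMf : 0 < Mf)
    (hf : StrongConvexOn Set.univ Mf f) {w' : S → A → ℝ} (hw' : ∀ s a, 0 ≤ w' s a)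
    {τ : ℝ} (hτ : 0 ≤ τ)
    (hgap : Lag P r μ0 γ dD f α v w - Lag P r μ0 γ dD f α v w'
      ≤ α * Mf * (1 - γ) ^ 2 * τ ^ 2 / 16) :
    ∑ s, ∑ a, dstar dD w s a * r s a - Jret P r μ0 γ (extractPolicy (behPolicy dD) w') ≤ τ := by
  have hγ : 0 < 1 - γ := sub_pos.mpr hM.γ_lt_one
  have hπ : IsPolicy (extractPolicy (behPolicy dD) w') :=
    isPolicy_extractPolicy (behPolicy_nonneg hM.dD_nonneg) hw'
  have h1 := sum_mul_sub_Jret_le hM hπ h.bellmanFlow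
  have h2 := sum_abs_sub_marginal_mul_le (d := dstar dD w) hπ
    (dstar_eq_marginal_mul_extractPolicy hM.dD_nonneg hw')
  have h3 := sum_abs_dstar_sub_sq_le hM.dD_nonneg hM.dD_sum w w'
  have h4 := h.sq_dist_le hM.dD_nonneg hα.le hf hw'
  set N := ∑ s, ∑ a, |dstar dD w s a - dstar dD w' s a|
  set Q := ∑ s, ∑ a, dD s a * (w s a - w' s a) ^ 2
  have h5 : Q ≤ ((1 - γ) * τ / 2) ^ 2 := by
    have hαM : 0 < α * Mf / 4 := by positivity
    rw [← mul_le_mul_iff_right₀ hαM]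
    calc α * Mf / 4 * Q ≤ α * Mf * (1 - γ) ^ 2 * τ ^ 2 / 16 := h4.trans hgap
      _ = _ := by ring
  have h6 : N ≤ (1 - γ) * τ / 2 := abs_le_of_sq_le_sq' (h3.trans h5) (by positivity) |>.2
  rw [← mul_le_mul_iff_right₀ hγ]
  linarith

end Saddle

/-! ### The empirical Lagrangian -/

section Empirical

variable {P : S → A → S → ℝ} {r : S → A → ℝ} {μ0 : S → ℝ} {γ : ℝ} {dD : S → A → ℝ}
  {f : ℝ → ℝ} {α : ℝ}

/-- The contribution of a single transition to the empirical Lagrangian. -/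
noncomputable def transitionTerm (r : S → A → ℝ) (γ : ℝ) (f : ℝ → ℝ) (α : ℝ) (v : S → ℝ)
    (w : S → A → ℝ) (x : (S × A) × S) : ℝ :=
  w x.1.1 x.1.2 * (r x.1.1 x.1.2 + γ * v x.2 - v x.1.1) - α * f (w x.1.1 x.1.2)

lemma abs_transitionTerm_le (hM : MDPAssumptions P r μ0 γ dD) (hα : 0 ≤ α)
    {v : S → ℝ} {w : S → A → ℝ} {Bw Bf Bv : ℝ} (hw : ∀ s a, 0 ≤ w s a ∧ w s a ≤ Bw)
    (hv : ∀ s, |v s| ≤ Bv) (hf : ∀ x, 0 ≤ x → x ≤ Bw → |f x| ≤ Bf) (x : (S × A) × S) :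
    |transitionTerm r γ f α v w x| ≤ α * Bf + Bw * ((1 + γ) * Bv + 1) := by
  obtain ⟨⟨s, a⟩, s'⟩ := x
  obtain ⟨hw0, hw1⟩ := hw s a
  have he : |r s a + γ * v s' - v s| ≤ (1 + γ) * Bv + 1 := by
    have h1 := mul_le_mul_of_nonneg_left (hv s') hM.γ_nonneg
    have h2 : |γ * v s'| = γ * |v s'| := by rw [abs_mul, abs_of_nonneg hM.γ_nonneg]
    have h3 : |r s a| ≤ 1 := by rw [abs_of_nonneg (hM.r_nonneg s a)]; exact hM.r_le_one s a
    have h4 := abs_sub (r s a + γ * v s') (v s)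
    have h5 := abs_add_le (r s a) (γ * v s')
    have h6 := hv s
    linarith
  simp only [transitionTerm]
  refine (abs_sub _ _).trans ?_
  rw [abs_mul, abs_mul, abs_of_nonneg hα, abs_of_nonneg hw0, add_comm]
  exact add_le_add (mul_le_mul_of_nonneg_left (hf _ hw0 hw1) hα)
    (mul_le_mul hw1 he (abs_nonneg _) (hw0.trans hw1))

lemma tupleWeight_nonneg (hM : MDPAssumptions P r μ0 γ dD) (x : (S × A) × S) :
    0 ≤ tupleWeight P dD x :=
  mul_nonneg (hM.dD_nonneg _ _) (hM.P_nonneg _ _ _)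

lemma tupleWeight_sum (hM : MDPAssumptions P r μ0 γ dD) :
    ∑ x, tupleWeight P dD x = 1 := by
  simp only [Fintype.sum_prod_type, tupleWeight, ← Finset.mul_sum, hM.P_sum, mul_one, hM.dD_sum]

lemma sum_tupleWeight_mul_transitionTerm (hM : MDPAssumptions P r μ0 γ dD) (v : S → ℝ)
    (w : S → A → ℝ) :
    ∑ x, tupleWeight P dD x * transitionTerm r γ f α v w x
      = ∑ s, ∑ a, dD s a * (w s a * eV P r γ v s a) - α * ∑ s, ∑ a, dD s a * f (w s a) := by
  simp only [Fintype.sum_prod_type, Finset.mul_sum, ← Finset.sum_sub_distrib]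
  refine Finset.sum_congr rfl fun s _ => Finset.sum_congr rfl fun a _ => ?_
  calc ∑ s', tupleWeight P dD ((s, a), s') * transitionTerm r γ f α v w ((s, a), s')
      = ∑ s', (dD s a * (w s a * (r s a - v s)) - α * (dD s a * f (w s a))) * P s a s'
          + ∑ s', dD s a * w s a * γ * (P s a s' * v s') := by
        rw [← Finset.sum_add_distrib]
        refine Finset.sum_congr rfl fun s' _ => ?_
        simp only [tupleWeight, transitionTerm]
        ring
    _ = _ := by
        rw [← Finset.mul_sum, ← Finset.mul_sum, hM.P_sum, eV]
        ring

lemma empLag_sub_Lag (hM : MDPAssumptions P r μ0 γ dD) {n n0 : ℕ} (D : Fin n → (S × A) × S)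
    (D0 : Fin n0 → S) (v : S → ℝ) (w : S → A → ℝ) :
    empLag r γ f α D D0 v w - Lag P r μ0 γ dD f α v w
      = (1 - γ) * ((n0 : ℝ)⁻¹ * ∑ j, v (D0 j) - ∑ s, μ0 s * v s)
        + ((n : ℝ)⁻¹ * ∑ i, transitionTerm r γ f α v w (D i)
          - ∑ x, tupleWeight P dD x * transitionTerm r γ f α v w x) := by
  rw [sum_tupleWeight_mul_transitionTerm hM, empLag, Lag]
  simp only [transitionTerm, Finset.sum_sub_distrib, ← Finset.mul_sum]
  ring

/-- A max-min point of the empirical Lagrangian nearly maximizes the population Lagrangian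
at the saddle value function. -/
lemma IsProRLOutput.Lag_gap_le {V : Finset (S → ℝ)} {W : Finset (S → A → ℝ)} {n n0 : ℕ}
    {D : Fin n → (S × A) × S} {D0 : Fin n0 → S} {vhat vst : S → ℝ} {what wst : S → A → ℝ}
    (hout : IsProRLOutput r γ f α V W D D0 vhat what)
    (h : IsSaddle P r μ0 γ dD f α vst wst) (hvst : vst ∈ V) (hwst : wst ∈ W) {η : ℝ}
    (hdev : ∀ v ∈ V, ∀ w ∈ W,
      |empLag r γ f α D D0 v w - Lag P r μ0 γ dD f α v w| ≤ η) :
    Lag P r μ0 γ dD f α vst wst - Lag P r μ0 γ dD f α vst what ≤ 2 * η := by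
  obtain ⟨-, hwhat, hmin, hmax⟩ := hout
  obtain ⟨vw, hvw, hvwmin⟩ := V.exists_min_image (fun v => empLag r γ f α D D0 v wst) ⟨vst, hvst⟩
  have h1 := h.2.1 vw
  have h2 := abs_le.mp (hdev vw hvw wst hwst)
  have h3 := hmax wst hwst vw hvw hvwmin
  have h4 := hmin vst hvst
  have h5 := abs_le.mp (hdev vst hvst what hwhat)
  linarith [h2.1, h5.2]

/-- Uniform concentration of the empirical Lagrangian over finite classes. -/
lemma measure_exists_empLag_dev_le [MeasurableSpace S] [MeasurableSpace A]
    [MeasurableSingletonClass S] [MeasurableSingletonClass A]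
    (hM : MDPAssumptions P r μ0 γ dD) {V : Finset (S → ℝ)} {W : Finset (S → A → ℝ)}
    (hV : V.Nonempty) (hW : W.Nonempty) {n n0 : ℕ} (hn : 0 < n) (hn0 : 0 < n0) {B Bv δ t t0 : ℝ}
    (hB : 0 < B) (hBv : 0 < Bv) (hδ : 0 < δ) (ht : 0 ≤ t) (ht0 : 0 ≤ t0)
    (hterm : ∀ v ∈ V, ∀ w ∈ W, ∀ x, |transitionTerm r γ f α v w x| ≤ B)
    (hv : ∀ v ∈ V, ∀ s, |v s| ≤ Bv)
    (hnB : Real.log (4 * (V.card : ℝ) * (W.card : ℝ) / δ) ≤ n * t ^ 2 / (2 * B ^ 2))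
    (hn0B : Real.log (4 * (V.card : ℝ) / δ) ≤ n0 * t0 ^ 2 / (2 * Bv ^ 2)) :
    dataMeasure P dD μ0 n n0 {ω | ∃ v ∈ V, ∃ w ∈ W,
        (1 - γ) * t0 + t < |empLag r γ f α ω.1 ω.2 v w - Lag P r μ0 γ dD f α v w|}
      ≤ ENNReal.ofReal δ := by
  have hpD := isProbabilityMeasure_discMeasure (tupleWeight_nonneg hM) (tupleWeight_sum hM)
  have hp0 := isProbabilityMeasure_discMeasure (fun s => (hM.μ0_pos s).le) hM.μ0_sum
  have hVc : (0 : ℝ) < V.card := by exact_mod_cast hV.card_pos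
  have hWc : (0 : ℝ) < W.card := by exact_mod_cast hW.card_pos
  let E0 : (S → ℝ) → Set (Fin n0 → S) := fun v =>
    {x | t0 ≤ |(n0 : ℝ)⁻¹ * ∑ j, v (x j) - ∑ s, μ0 s * v s|}
  let E1 : (S → ℝ) → (S → A → ℝ) → Set (Fin n → (S × A) × S) := fun v w =>
    {x | t ≤ |(n : ℝ)⁻¹ * ∑ i, transitionTerm r γ f α v w (x i)
      - ∑ y, tupleWeight P dD y * transitionTerm r γ f α v w y|}
  have hE0 : ∀ v ∈ V, dataMeasure P dD μ0 n n0 (Set.univ ×ˢ E0 v)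
      ≤ ENNReal.ofReal (δ / (2 * V.card)) := by
    intro v hvV
    rw [dataMeasure, Measure.prod_prod, measure_univ, one_mul]
    refine (measure_empMean_abs_sub_ge_le (fun s => (hM.μ0_pos s).le) hM.μ0_sum hBv
      (hv v hvV) hn0 ht0).trans (ENNReal.ofReal_le_ofReal ?_)
    have := Real.exp_le_exp.mpr (neg_le_neg hn0B)
    rw [Real.exp_neg (Real.log _), Real.exp_log (by positivity), inv_div] at this
    calc _ ≤ 2 * (δ / (4 * V.card)) := by gcongr
      _ = _ := by field_simp; norm_num
  have hE1 : ∀ v ∈ V, ∀ w ∈ W, dataMeasure P dD μ0 n n0 (E1 v w ×ˢ Set.univ)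
      ≤ ENNReal.ofReal (δ / (2 * V.card * W.card)) := by
    intro v hvV w hwW
    rw [dataMeasure, Measure.prod_prod, measure_univ, mul_one]
    refine (measure_empMean_abs_sub_ge_le (tupleWeight_nonneg hM) (tupleWeight_sum hM) hB
      (hterm v hvV w hwW) hn ht).trans (ENNReal.ofReal_le_ofReal ?_)
    have := Real.exp_le_exp.mpr (neg_le_neg hnB)
    rw [Real.exp_neg (Real.log _), Real.exp_log (by positivity), inv_div] at this
    calc _ ≤ 2 * (δ / (4 * V.card * W.card)) := by gcongr
      _ = _ := by field_simp; norm_num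
  have hsub : {ω : (Fin n → (S × A) × S) × (Fin n0 → S) | ∃ v ∈ V, ∃ w ∈ W,
        (1 - γ) * t0 + t < |empLag r γ f α ω.1 ω.2 v w - Lag P r μ0 γ dD f α v w|}
      ⊆ (⋃ v ∈ V, Set.univ ×ˢ E0 v) ∪ ⋃ v ∈ V, ⋃ w ∈ W, E1 v w ×ˢ Set.univ := by
    rintro ω ⟨v, hvV, w, hwW, hlt⟩
    rw [empLag_sub_Lag hM] at hlt
    by_contra hnot
    have hγ : 0 ≤ 1 - γ := sub_nonneg.mpr hM.γ_lt_one.le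
    have h0 : |(n0 : ℝ)⁻¹ * ∑ j, v (ω.2 j) - ∑ s, μ0 s * v s| ≤ t0 := by
      by_contra! hc
      exact hnot (Or.inl (Set.mem_biUnion hvV ⟨Set.mem_univ _, hc.le⟩))
    have h1 : |(n : ℝ)⁻¹ * ∑ i, transitionTerm r γ f α v w (ω.1 i)
        - ∑ y, tupleWeight P dD y * transitionTerm r γ f α v w y| ≤ t := by
      by_contra! hc
      exact hnot (Or.inr (Set.mem_biUnion hvV (Set.mem_biUnion hwW ⟨hc.le, Set.mem_univ _⟩)))
    have h2 := mul_le_mul_of_nonneg_left h0 hγ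
    rw [← abs_of_nonneg hγ, ← abs_mul, abs_of_nonneg hγ] at h2
    exact absurd hlt (not_lt.mpr ((abs_add_le _ _).trans (add_le_add h2 h1)))
  calc _ ≤ dataMeasure P dD μ0 n n0
          ((⋃ v ∈ V, Set.univ ×ˢ E0 v) ∪ ⋃ v ∈ V, ⋃ w ∈ W, E1 v w ×ˢ Set.univ) :=
        measure_mono hsub
    _ ≤ ∑ _v ∈ V, ENNReal.ofReal (δ / (2 * V.card))
          + ∑ _v ∈ V, ∑ _w ∈ W, ENNReal.ofReal (δ / (2 * V.card * W.card)) := by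
        refine (measure_union_le _ _).trans (add_le_add ?_ ?_)
        · exact (measure_biUnion_finset_le _ _).trans (Finset.sum_le_sum hE0)
        · refine (measure_biUnion_finset_le _ _).trans (Finset.sum_le_sum fun v hvV => ?_)
          exact (measure_biUnion_finset_le _ _).trans (Finset.sum_le_sum (hE1 v hvV))
    _ = ENNReal.ofReal (δ / 2) + ENNReal.ofReal (δ / 2) := by
        simp only [Finset.sum_const, nsmul_eq_mul, ← ENNReal.ofReal_natCast]
        rw [← ENNReal.ofReal_mul hVc.le, ← ENNReal.ofReal_mul hWc.le,
          ← ENNReal.ofReal_mul hVc.le]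
        congr 2 <;> field_simp
    _ = ENNReal.ofReal δ := by
        rw [← ENNReal.ofReal_add (by positivity) (by positivity), add_halves]

end Empirical

/-- Corollary 1: sample complexity of competing with `π*₀`. -/
theorem stmt1 :
    ∃ C1 : ℝ, 0 < C1 ∧
    ∀ (S A : Type) [Fintype S] [Fintype A] [Nonempty S] [Nonempty A]
      [MeasurableSpace S] [MeasurableSpace A]
      [MeasurableSingletonClass S] [MeasurableSingletonClass A]
      (P : S → A → S → ℝ) (r : S → A → ℝ) (μ0 : S → ℝ) (γ : ℝ) (dD : S → A → ℝ),
      MDPAssumptions P r μ0 γ dD →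
      ∀ (f f' : ℝ → ℝ) (ε δ : ℝ), 0 < ε → 0 < δ → δ < 1 →
      ∀ (Mf Bw0 Bf0 Bwα Bf'α Bfα Bvα Beα : ℝ) (π0 : S → A → ℝ),
      -- π*₀ is an optimal policy whose occupancy d*₀ is covered by the data
      IsPolicy π0 →
      (∀ π : S → A → ℝ, IsPolicy π → Jret P r μ0 γ π ≤ Jret P r μ0 γ π0) →
      (∀ s a, occ P μ0 γ π0 s a ≤ Bw0 * dD s a) →
      -- B_{f,0} bounds |f| on [0, B_{w,0}]
      (∀ x, 0 ≤ x → x ≤ Bw0 → |f x| ≤ Bf0) → 0 < Bf0 →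
      -- (A5) at α = α_ε := ε/(2 B_{f,0})
      RegAssumptions f f' Mf Bwα Bf'α Bfα → (∀ x, 0 ≤ f x) →
      Bvα = (ε / (2 * Bf0) * Bf'α + 1) / (1 - γ) → Beα = (1 + γ) * Bvα + 1 →
      ∀ (vst : S → ℝ) (wst : S → A → ℝ),
        IsSaddle P r μ0 γ dD f (ε / (2 * Bf0)) vst wst →
      ∀ (V : Finset (S → ℝ)) (W : Finset (S → A → ℝ)),
        -- (A1)–(A4), (A6) at α = α_ε
        (∀ s a, dstar dD wst s a ≤ Bwα * dD s a) →
        vst ∈ V → wst ∈ W →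
        (∀ w ∈ W, ∀ s a, 0 ≤ w s a ∧ w s a ≤ Bwα) →
        (∀ v ∈ V, ∀ s, |v s| ≤ Bvα) →
      ∀ (n n0 : ℕ), 0 < n → 0 < n0 →
        C1 * (ε * Bfα + 2 * Bwα * Beα * Bf0) ^ 2 / (ε ^ 6 * Mf ^ 2 * (1 - γ) ^ 4)
            * Real.log (4 * (V.card : ℝ) * (W.card : ℝ) / δ) ≤ (n : ℝ) →
        C1 * (2 * Bvα * Bf0) ^ 2 / (ε ^ 6 * Mf ^ 2 * (1 - γ) ^ 2)
            * Real.log (4 * (V.card : ℝ) / δ) ≤ (n0 : ℝ) →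
      ∀ (vhat : (Fin n → (S × A) × S) × (Fin n0 → S) → S → ℝ)
        (what : (Fin n → (S × A) × S) × (Fin n0 → S) → S → A → ℝ),
        (∀ ω, IsProRLOutput r γ f (ε / (2 * Bf0)) V W ω.1 ω.2 (vhat ω) (what ω)) →
        1 - ENNReal.ofReal δ ≤
          dataMeasure P dD μ0 n n0 {ω |
            Jret P r μ0 γ π0
              - Jret P r μ0 γ (extractPolicy (behPolicy dD) (what ω)) ≤ ε } := by
  refine ⟨131072, by norm_num, ?_⟩
  intro S A _ _ _ _ _ _ _ _ P r μ0 γ dD hM f f' ε δ hε hδ _ Mf Bw0 Bf0 Bwα Bf'α Bfα Bvα Beα π0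
    hπ0 _ hcov hBf0 hBf0pos hreg hf hBv hBe vst wst hsad V W _ hvst hwst hW hV n n0 hn hn0 hnL hn0L
    vhat what hout
  set α := ε / (2 * Bf0) with hα
  have hMf := hreg.Mf_pos
  have hαpos : 0 < α := by positivity
  have hγ : 0 < 1 - γ := sub_pos.mpr hM.γ_lt_one
  have hBwpos : 0 < Bwα := by
    obtain ⟨s⟩ := ‹Nonempty S›
    by_contra! hBw
    have hw0 : ∀ s a, dstar dD wst s a = 0 := fun s a => by
      rw [dstar, le_antisymm ((hW wst hwst s a).2.trans hBw) (hW wst hwst s a).1, zero_mul]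
    have := hsad.bellmanFlow s
    simp only [hw0, mul_zero, Finset.sum_const_zero, add_zero] at this
    exact absurd this (mul_pos hγ (hM.μ0_pos s)).ne
  have hBf'nn : 0 ≤ Bf'α := (abs_nonneg _).trans (hreg.f'_bdd 0 le_rfl hBwpos.le)
  have hBfnn : 0 ≤ Bfα := (abs_nonneg _).trans (hreg.f_bdd 0 le_rfl hBwpos.le)
  have hBvpos : 0 < Bvα := by rw [hBv]; positivity
  have hBepos : 0 < Beα := by
    have := hM.γ_nonneg
    rw [hBe]; positivity
  set B := α * Bfα + Bwα * Beα with hB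
  have hBpos : 0 < B := by positivity
  set t := ε ^ 3 * Mf * (1 - γ) ^ 2 / (512 * Bf0) with ht
  set t0 := ε ^ 3 * Mf * (1 - γ) / (512 * Bf0) with ht0
  have htpos : 0 < t := by positivity
  have ht0pos : 0 < t0 := by positivity
  have hBK : ε * Bfα + 2 * Bwα * Beα * Bf0 = 2 * Bf0 * B := by
    rw [hB, hα]
    field_simp
  rw [hBK] at hnL
  have hlog : Real.log (4 * (V.card : ℝ) * (W.card : ℝ) / δ) ≤ n * t ^ 2 / (2 * B ^ 2) := by
    refine le_trans (le_of_eq ?_) (div_le_div_of_nonneg_right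
      (mul_le_mul_of_nonneg_right hnL (sq_nonneg t)) (by positivity))
    rw [ht]
    field_simp
    ring
  have hlog0 : Real.log (4 * (V.card : ℝ) / δ) ≤ n0 * t0 ^ 2 / (2 * Bvα ^ 2) := by
    refine le_trans (le_of_eq ?_) (div_le_div_of_nonneg_right
      (mul_le_mul_of_nonneg_right hn0L (sq_nonneg t0)) (by positivity))
    rw [ht0]
    field_simp
    ring
  have hbad := measure_exists_empLag_dev_le hM ⟨vst, hvst⟩ ⟨wst, hwst⟩ hn hn0 hBpos hBvpos hδ
    htpos.le ht0pos.le (f := f) (α := α)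
    (fun v hv w hw x => by
      rw [hB, hBe]
      exact abs_transitionTerm_le hM hαpos.le (hW w hw) (hV v hv) hreg.f_bdd x)
    hV hlog hlog0
  have hpD := isProbabilityMeasure_discMeasure (tupleWeight_nonneg hM) (tupleWeight_sum hM)
  have hp0 := isProbabilityMeasure_discMeasure (fun s => (hM.μ0_pos s).le) hM.μ0_sum
  have hprob : IsProbabilityMeasure (dataMeasure P dD μ0 n n0) := by
    unfold dataMeasure
    infer_instance
  rw [tsub_le_iff_right]
  refine le_trans ?_ (add_le_add_right hbad _)
  refine le_trans ?_ (measure_union_le _ _)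
  rw [← measure_univ (μ := dataMeasure P dD μ0 n n0)]
  refine measure_mono fun ω _ => ?_
  by_cases hω : ∃ v ∈ V, ∃ w ∈ W,
      (1 - γ) * t0 + t < |empLag r γ f α ω.1 ω.2 v w - Lag P r μ0 γ dD f α v w|
  · exact Or.inr hω
  · left
    push Not at hω
    have hgap := (hout ω).Lag_gap_le hsad hvst hwst hω
    have hη : 2 * ((1 - γ) * t0 + t) = α * Mf * (1 - γ) ^ 2 * (ε / 2) ^ 2 / 16 := by
      rw [ht, ht0, hα]
      field_simp
      norm_num
    have h1 := hsad.sum_sub_Jret_extractPolicy_le hM hαpos hMf hreg.strong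
      (fun s a => (hW _ (hout ω).2.1 s a).1) (by positivity) (hgap.trans_eq hη)
    have h2 := hsad.Jret_sub_le hM hαpos.le hf hπ0 hcov hBf0
    have h3 : α * Bf0 = ε / 2 := by
      rw [hα]
      field_simp
    show _ ≤ ε
    linarith
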